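/- Let K be an algebraically closed field, n ≥ 1 an integer, and ζ ∈ K a primitive n-th root of unity. Consider pairs (A,B) ∈ GL(n,K)² with A B A⁻¹ B⁻¹ = ζ·I_n. Then: (i) every such pair satisfies A^n = α·I_n and B^n = β·I_n for unique α, β ∈ K^×; (ii) two such pairs (A,B) and (A′,B′) are simultaneously conjugate by an element of GL(n,K) if and only if A^n = A′^n and B^n = B′^n; and (iii) for every (α,β) ∈ K^× × K^× there exists such a pair with A^n = α·I_n and B^n = β·I_n. In other words, (A,B) ↦ (α,β) induces a bijection between GL(n,K)-conjugation orbits of solutions and K^× × K^×. -/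

import Mathlib

open scoped MatrixGroups

/-!
The monomials `B ^ j * A ^ i` with `i, j < n` are simultaneous eigenvectors of conjugation by `A`
and by `B⁻¹`, with pairwise distinct weights `(ζ ^ j, ζ ^ i)`. There are `n ^ 2` of them, so they
form a basis of the matrix algebra. Hence `A ^ n`, which commutes with `A` and `B`, is central and
therefore scalar. As the multiplication table of this basis involves only `ζ`, `A ^ n` and `B ^ n`,
two pairs with the same `n`-th powers correspond under an algebra automorphism, and every
automorphism of a matrix algebra is inner. For existence, take multiplication by the root `x` in
`K[X] / (X ^ n - β)` and a multiple of the automorphism `x ↦ ζ x`.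
-/

section Preliminaries

lemma linearIndependent_of_commute_of_apply_eq_smul {ι κ K M : Type*} [CommRing K] [IsDomain K]
    [AddCommGroup M] [Module K M] [Module.IsTorsionFree K M] {f : ι → Module.End K M}
    (hf : ∀ i j, Commute (f i) (f j)) {χ : κ → ι → K} (hχ : Function.Injective χ) {v : κ → M}
    (hv : ∀ k, v k ≠ 0) (hfv : ∀ k i, f i (v k) = χ k i • v k) : LinearIndependent K v := by
  have independent := (Module.End.independent_iInf_maxGenEigenspace_of_forall_mapsTo f
    fun i j ↦ Module.End.mapsTo_maxGenEigenspace_of_comm (hf j i)).comp hχ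
  refine independent.linearIndependent _ (fun k ↦ ?_) hv
  simp only [Function.comp_apply, Submodule.mem_iInf]
  exact fun i ↦ Module.End.mem_maxGenEigenspace .. |>.2 ⟨1, by simp [hfv]⟩

lemma exists_forall_matrix_algEquiv_eq_conj {ι K : Type*} [Fintype ι] [DecidableEq ι] [Field K]
    (f : Matrix ι ι K ≃ₐ[K] Matrix ι ι K) :
    ∃ g : GL ι K, ∀ x, f x = g * x * (g⁻¹ : GL ι K) := by
  let e : Matrix ι ι K ≃ₐ[K] Module.End K (ι → K) := Matrix.toLinAlgEquiv'
  obtain ⟨T, hT⟩ := Module.End.mulSemiringActionToAlgEquiv_conjAct_surjective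
    ((e.symm.trans f).trans e)
  obtain ⟨g, hg⟩ := Matrix.GeneralLinearGroup.toLin.surjective (ConjAct.ofConjAct T)
  refine ⟨g, fun x ↦ e.injective ?_⟩
  calc e (f x) = T • e x := by simpa using (DFunLike.congr_fun hT (e x)).symm
    _ = e g * e x * e (g⁻¹ : GL ι K) := by rw [ConjAct.units_smul_def, ← hg]; rfl
    _ = e (g * x * (g⁻¹ : GL ι K)) := by simp only [map_mul]

lemma coe_conj_pow_eq_of_commute {M : Type*} [Monoid M] {u g : Mˣ} {n : ℕ}
    (h : Commute ((u : M) ^ n) g) : (↑(g * u * g⁻¹) : M) ^ n = (u : M) ^ n := by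
  rw [Units.val_mul, Units.val_mul, Units.conj_pow, ← h.eq, Units.mul_inv_cancel_right]

lemma pow_eq_smul_pow_mod {K R : Type*} [CommSemiring K] [Semiring R] [Algebra K R] {n : ℕ} {a : R}
    {α : K} (ha : a ^ n = α • (1 : R)) (i : ℕ) : a ^ i = α ^ (i / n) • a ^ (i % n) := by
  conv_lhs => rw [← Nat.div_add_mod i n, pow_add, pow_mul, ha, smul_pow, one_pow, smul_one_mul]

lemma isUnit_of_pow_eq_smul_one {K R : Type*} [Semifield K] [Semiring R] [Algebra K R] {n : ℕ}
    (hn : n ≠ 0) {a : R} {α : K} (hα : α ≠ 0) (ha : a ^ n = α • (1 : R)) : IsUnit a := by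
  rw [← isUnit_pow_iff hn, ha, ← Algebra.algebraMap_eq_smul_one]
  exact hα.isUnit.map _

lemma finrank_matrix_fin_self (K : Type*) [Semiring K] [StrongRankCondition K] (n : ℕ) :
    Module.finrank K (Matrix (Fin n) (Fin n) K) = n ^ 2 := by
  simp [Module.finrank_matrix, sq]

end Preliminaries

/-- The relation `a b = q b a` of the quantum torus, in an algebra over the scalars containing
`q`; for units it says that the commutator `[a, b]` is the scalar `q`. -/
def QCommute {K R : Type*} [CommSemiring K] [Semiring R] [Algebra K R] (q : K) (a b : R) : Prop :=
  a * b = q • (b * a)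

namespace QCommute

section Semiring

variable {K R : Type*} [CommSemiring K] [Semiring R] [Algebra K R] {q : K}

lemma coe_commutator_eq_smul_one_iff {u v : Rˣ} :
    (↑(u * v * u⁻¹ * v⁻¹) : R) = q • (1 : R) ↔ QCommute q (u : R) v := by
  have commutator_eq : u * v * u⁻¹ * v⁻¹ = u * v * (v * u)⁻¹ := by group
  rw [commutator_eq, Units.val_mul, Units.mul_inv_eq_iff_eq_mul, smul_one_mul, Units.val_mul,
    Units.val_mul, QCommute]

variable {a b : R}

lemma map {R' : Type*} [Semiring R'] [Algebra K R'] (h : QCommute q a b) (f : R →ₐ[K] R') :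
    QCommute q (f a) (f b) := by
  rw [QCommute, ← map_mul, h, map_smul, map_mul]

lemma pow_left (h : QCommute q a b) (i : ℕ) : QCommute (q ^ i) (a ^ i) b := by
  induction i with
  | zero => simp [QCommute]
  | succ i ih =>
    calc a ^ (i + 1) * b = a ^ i * (a * b) := by rw [pow_succ, mul_assoc]
      _ = q • (a ^ i * b * a) := by rw [h, mul_smul_comm, mul_assoc]
      _ = q ^ (i + 1) • (b * a ^ (i + 1)) := by
        rw [ih, smul_mul_assoc, smul_smul, mul_assoc, ← pow_succ, ← pow_succ']

lemma pow_right (h : QCommute q a b) (j : ℕ) : QCommute (q ^ j) a (b ^ j) := by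
  induction j with
  | zero => simp [QCommute]
  | succ j ih =>
    calc a * b ^ (j + 1) = a * b ^ j * b := by rw [pow_succ, mul_assoc]
      _ = q ^ j • (b ^ j * (a * b)) := by rw [ih, smul_mul_assoc, mul_assoc]
      _ = q ^ (j + 1) • (b ^ (j + 1) * a) := by
        rw [h, mul_smul_comm, smul_smul, ← mul_assoc, ← pow_succ, ← pow_succ]

lemma pow_pow (h : QCommute q a b) (i j : ℕ) : QCommute (q ^ (i * j)) (a ^ i) (b ^ j) :=
  pow_mul q i j ▸ (h.pow_left i).pow_right j

lemma commute_pow_left (h : QCommute q a b) {n : ℕ} (hq : q ^ n = 1) : Commute (a ^ n) b := by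
  simpa [QCommute, hq, commute_iff_eq] using h.pow_left n

lemma monomial_mul_monomial (h : QCommute q a b) (i j k l : ℕ) :
    b ^ j * a ^ i * (b ^ l * a ^ k) = q ^ (i * l) • (b ^ (j + l) * a ^ (i + k)) := by
  calc b ^ j * a ^ i * (b ^ l * a ^ k) = b ^ j * (a ^ i * b ^ l) * a ^ k := by
        simp only [mul_assoc]
    _ = q ^ (i * l) • (b ^ (j + l) * a ^ (i + k)) := by
      rw [h.pow_pow, mul_smul_comm, smul_mul_assoc, pow_add, pow_add]
      simp only [mul_assoc]

lemma commute_mulLeftRight {u v : Rˣ} (h : QCommute q (u : R) v) :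
    Commute (LinearMap.mulLeftRight K ((u : R), (↑u⁻¹ : R)))
      (LinearMap.mulLeftRight K ((↑v⁻¹ : R), (v : R))) := by
  have swap_left : (↑v⁻¹ * u : R) = q • (↑u * ↑v⁻¹ : R) := by
    rw [Units.inv_mul_eq_iff_eq_mul, mul_smul_comm, ← mul_assoc, ← smul_mul_assoc, ← h,
      Units.mul_inv_cancel_right]
  have swap_right : (v * ↑u⁻¹ : R) = q • (↑u⁻¹ * v : R) := by
    rw [Units.mul_inv_eq_iff_eq_mul, smul_mul_assoc, mul_assoc, ← mul_smul_comm, ← h,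
      Units.inv_mul_cancel_left]
  ext x
  calc u * (↑v⁻¹ * x * v) * ↑u⁻¹ = u * ↑v⁻¹ * x * (v * ↑u⁻¹) := by simp only [mul_assoc]
    -- the scalars `q` from the two swaps appear on opposite sides and cancel
    _ = ↑v⁻¹ * u * x * (↑u⁻¹ * v) := by
      rw [swap_left, swap_right, mul_smul_comm, smul_mul_assoc, smul_mul_assoc]
    _ = ↑v⁻¹ * (u * x * ↑u⁻¹) * v := by simp only [mul_assoc]

end Semiring

lemma symm {K R : Type*} [Semifield K] [Semiring R] [Algebra K R] {q : K} {a b : R}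
    (h : QCommute q a b) (hq : q ≠ 0) : QCommute q⁻¹ b a := by
  rw [QCommute, h, inv_smul_smul₀ hq]

section MonomialBasis

variable {K R : Type*} [Field K] [Ring R] [Nontrivial R] [Algebra K R] {n : ℕ} {q : K} {a b : Rˣ}

lemma linearIndependent_monomials (h : QCommute q (a : R) b) (hq : IsPrimitiveRoot q n) :
    LinearIndependent K fun p : Fin n × Fin n ↦ (b ^ (p.2 : ℕ) * a ^ (p.1 : ℕ) : R) := by
  refine linearIndependent_of_commute_of_apply_eq_smul
    (f := ![LinearMap.mulLeftRight K ((a : R), (↑a⁻¹ : R)),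
      LinearMap.mulLeftRight K ((↑b⁻¹ : R), (b : R))])
    (χ := fun p ↦ ![q ^ (p.2 : ℕ), q ^ (p.1 : ℕ)]) ?commute ?injective ?ne_zero ?eigenvector
  case commute =>
    simp [Fin.forall_fin_two, h.commute_mulLeftRight, h.commute_mulLeftRight.symm]
  case injective =>
    intro p p' hp
    ext
    · exact hq.pow_inj p.1.2 p'.1.2 (congrFun hp 1)
    · exact hq.pow_inj p.2.2 p'.2.2 (congrFun hp 0)
  case ne_zero =>
    exact fun p ↦ ((b.isUnit.pow p.2).mul (a.isUnit.pow p.1)).ne_zero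
  case eigenvector =>
    refine fun ⟨i, j⟩ ↦ Fin.forall_fin_two.2 ⟨?_, ?_⟩
    · change a * (b ^ (j : ℕ) * a ^ (i : ℕ)) * ↑a⁻¹ = q ^ (j : ℕ) • (b ^ (j : ℕ) * a ^ (i : ℕ) : R)
      rw [Units.mul_inv_eq_iff_eq_mul]
      simpa [pow_add, mul_assoc, add_comm 1] using h.monomial_mul_monomial 1 0 i j
    · change ↑b⁻¹ * (b ^ (j : ℕ) * a ^ (i : ℕ)) * b = q ^ (i : ℕ) • (b ^ (j : ℕ) * a ^ (i : ℕ) : R)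
      rw [mul_assoc, Units.inv_mul_eq_iff_eq_mul]
      simpa [pow_succ', mul_assoc] using h.monomial_mul_monomial i j 0 1

variable [NeZero n]

/-- The basis of monomials `b ^ j * a ^ i` with `i, j < n`, indexed by `(i, j)`, of an algebra of
dimension `n ^ 2`. Powers of `b` come first so that products of monomials involve only nonnegative
powers of `q`. -/
noncomputable def monomialBasis (h : QCommute q (a : R) b) (hq : IsPrimitiveRoot q n)
    (hR : Module.finrank K R = n ^ 2) : Module.Basis (Fin n × Fin n) K R :=
  basisOfLinearIndependentOfCardEqFinrank (h.linearIndependent_monomials hq) (by simp [hR, sq])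

lemma monomialBasis_apply (h : QCommute q (a : R) b) (hq : IsPrimitiveRoot q n)
    (hR : Module.finrank K R = n ^ 2) (p : Fin n × Fin n) :
    h.monomialBasis hq hR p = (b ^ (p.2 : ℕ) * a ^ (p.1 : ℕ) : R) := by
  simp [monomialBasis]

lemma mem_center_of_commute (h : QCommute q (a : R) b) (hq : IsPrimitiveRoot q n)
    (hR : Module.finrank K R = n ^ 2) {x : R} (hxa : Commute x a) (hxb : Commute x b) :
    x ∈ Subalgebra.center K R := by
  have mulLeft_eq_mulRight : LinearMap.mulLeft K x = LinearMap.mulRight K x := by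
    refine (h.monomialBasis hq hR).ext fun p ↦ ?_
    rw [monomialBasis_apply]
    exact (hxb.pow_right p.2).mul_right (hxa.pow_right p.1)
  exact Subalgebra.mem_center_iff.2 fun y ↦ (LinearMap.congr_fun mulLeft_eq_mulRight y).symm

lemma pow_mem_center (h : QCommute q (a : R) b) (hq : IsPrimitiveRoot q n)
    (hR : Module.finrank K R = n ^ 2) : (a : R) ^ n ∈ Subalgebra.center K R :=
  h.mem_center_of_commute hq hR (Commute.pow_self _ n) (h.commute_pow_left hq.pow_eq_one)

lemma exists_pow_eq_smul_one [Algebra.IsCentral K R] (h : QCommute q (a : R) b)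
    (hq : IsPrimitiveRoot q n) (hR : Module.finrank K R = n ^ 2) :
    ∃ α : K, α ≠ 0 ∧ (a : R) ^ n = α • (1 : R) := by
  obtain ⟨α, hα⟩ := (Algebra.IsCentral.mem_center_iff K).1 (h.pow_mem_center hq hR)
  rw [Algebra.algebraMap_eq_smul_one] at hα
  refine ⟨α, ?_, hα⟩
  rintro rfl
  exact (a.isUnit.pow n).ne_zero (by rw [hα, zero_smul])

section AlgEquiv

variable {R' : Type*} [Ring R'] [Nontrivial R'] [Algebra K R'] {a' b' : R'ˣ} {α β : K}

lemma monomialBasis_equiv_apply (h : QCommute q (a : R) b) (h' : QCommute q (a' : R') b')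
    (hq : IsPrimitiveRoot q n) (hR : Module.finrank K R = n ^ 2)
    (hR' : Module.finrank K R' = n ^ 2)
    (ha : (a : R) ^ n = α • (1 : R)) (hb : (b : R) ^ n = β • (1 : R))
    (ha' : (a' : R') ^ n = α • (1 : R')) (hb' : (b' : R') ^ n = β • (1 : R')) (i j : ℕ) :
    (h.monomialBasis hq hR).equiv (h'.monomialBasis hq hR') (Equiv.refl _) (b ^ j * a ^ i) =
      b' ^ j * a' ^ i := by
  have apply_reduced := (h.monomialBasis hq hR).equiv_apply (Fin.ofNat n i, Fin.ofNat n j)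
    (h'.monomialBasis hq hR') (Equiv.refl _)
  simp only [monomialBasis_apply, Equiv.refl_apply, Fin.val_ofNat] at apply_reduced
  rw [pow_eq_smul_pow_mod ha, pow_eq_smul_pow_mod hb, pow_eq_smul_pow_mod ha',
    pow_eq_smul_pow_mod hb']
  simp only [smul_mul_smul_comm, map_smul, apply_reduced]

lemma exists_algEquiv (h : QCommute q (a : R) b) (h' : QCommute q (a' : R') b')
    (hq : IsPrimitiveRoot q n) (hR : Module.finrank K R = n ^ 2)
    (hR' : Module.finrank K R' = n ^ 2)
    (ha : (a : R) ^ n = α • (1 : R)) (hb : (b : R) ^ n = β • (1 : R))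
    (ha' : (a' : R') ^ n = α • (1 : R')) (hb' : (b' : R') ^ n = β • (1 : R')) :
    ∃ f : R ≃ₐ[K] R', f a = a' ∧ f b = b' := by
  let e := h.monomialBasis hq hR
  let f := e.equiv (h'.monomialBasis hq hR') (Equiv.refl _)
  have map_monomial (i j : ℕ) : f (b ^ j * a ^ i) = b' ^ j * a' ^ i :=
    h.monomialBasis_equiv_apply h' hq hR hR' ha hb ha' hb' i j
  have map_mul : ∀ x y, f (x * y) = f x * f y := by
    refine (LinearMap.map_mul_iff f.toLinearMap).2 (e.ext fun p ↦ e.ext fun p' ↦ ?_)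
    simp [e, monomialBasis_apply, h.monomial_mul_monomial, h'.monomial_mul_monomial, map_monomial]
  refine ⟨.ofLinearEquiv f (by simpa using map_monomial 0 0) map_mul, ?_, ?_⟩
  · simpa using map_monomial 1 0
  · simpa using map_monomial 0 1

end AlgEquiv

end MonomialBasis

section GeneralLinearGroup

variable {K : Type*} [Field K] {n : ℕ} [NeZero n] {ζ : K} {A B A' B' : GL (Fin n) K}

lemma existsUnique_pow_eq_smul_one (h : QCommute ζ A.val B.val) (hζ : IsPrimitiveRoot ζ n) :
    ∃! αβ : K × K, αβ.1 ≠ 0 ∧ αβ.2 ≠ 0 ∧ A.val ^ n = αβ.1 • (1 : Matrix (Fin n) (Fin n) K) ∧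
      B.val ^ n = αβ.2 • (1 : Matrix (Fin n) (Fin n) K) := by
  have hdim := finrank_matrix_fin_self K n
  obtain ⟨α, hα, hA⟩ := h.exists_pow_eq_smul_one hζ hdim
  obtain ⟨β, hβ, hB⟩ :=
    (h.symm (hζ.ne_zero (NeZero.ne n))).exists_pow_eq_smul_one hζ.inv hdim
  have smul_one_injective := smul_left_injective K (one_ne_zero (α := Matrix (Fin n) (Fin n) K))
  refine ⟨(α, β), ⟨hα, hβ, hA, hB⟩, ?_⟩
  rintro ⟨α', β'⟩ ⟨-, -, hA', hB'⟩
  exact Prod.ext (smul_one_injective (hA'.symm.trans hA)) (smul_one_injective (hB'.symm.trans hB))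

lemma exists_conj_eq_iff (h : QCommute ζ A.val B.val) (h' : QCommute ζ A'.val B'.val)
    (hζ : IsPrimitiveRoot ζ n) :
    (∃ g : GL (Fin n) K, A' = g * A * g⁻¹ ∧ B' = g * B * g⁻¹) ↔
      A.val ^ n = A'.val ^ n ∧ B.val ^ n = B'.val ^ n := by
  obtain ⟨⟨α, β⟩, ⟨-, -, hA, hB⟩, -⟩ := h.existsUnique_pow_eq_smul_one hζ
  constructor
  · rintro ⟨g, rfl, rfl⟩
    have scalar_commute (c : K) : Commute (c • (1 : Matrix (Fin n) (Fin n) K)) g :=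
      (Commute.one_left _).smul_left c
    exact ⟨(coe_conj_pow_eq_of_commute (hA ▸ scalar_commute α)).symm,
      (coe_conj_pow_eq_of_commute (hB ▸ scalar_commute β)).symm⟩
  · rintro ⟨hAA', hBB'⟩
    have hdim := finrank_matrix_fin_self K n
    obtain ⟨f, hfA, hfB⟩ := h.exists_algEquiv h' hζ hdim hdim hA hB (hAA' ▸ hA) (hBB' ▸ hB)
    obtain ⟨g, hg⟩ := exists_forall_matrix_algEquiv_eq_conj f
    exact ⟨g, Units.ext (hfA ▸ hg A), Units.ext (hfB ▸ hg B)⟩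

end GeneralLinearGroup

end QCommute

section Existence

open Polynomial

variable {K : Type*} [Field K] {n : ℕ} [NeZero n] {ζ : K}

lemma exists_qCommute_end_adjoinRoot (hζ : ζ ^ n = 1) (a β : K) :
    ∃ A B : Module.End K (AdjoinRoot (X ^ n - C β)),
      QCommute ζ A B ∧ A ^ n = a ^ n • 1 ∧ B ^ n = β • 1 := by
  let η := rootsOfUnity.mkOfPowEq ζ hζ
  let σ := autAdjoinRootXPowSubC n β η
  have σ_root : σ (AdjoinRoot.root _) = ζ • AdjoinRoot.root _ := autAdjoinRootXPowSubC_root ..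
  have η_pow : η ^ n = 1 := Subtype.ext η.2
  have σ_pow : σ ^ n = 1 := by rw [← map_pow, η_pow, map_one]
  refine ⟨a • σ.toLinearMap, Algebra.lmul K _ (AdjoinRoot.root _), LinearMap.ext fun x ↦ ?_, ?_, ?_⟩
  · simp [σ_root, smul_comm a ζ]
  · rw [_root_.smul_pow, ← AlgEquiv.pow_toLinearMap, σ_pow, AlgEquiv.one_toLinearMap]
  · rw [← map_pow, root_X_pow_sub_C_pow, ← AdjoinRoot.algebraMap_eq, AlgHom.commutes,
      Algebra.algebraMap_eq_smul_one]

lemma exists_qCommute_matrix (hζ : ζ ^ n = 1) (a β : K) :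
    ∃ A B : Matrix (Fin n) (Fin n) K,
      QCommute ζ A B ∧ A ^ n = a ^ n • 1 ∧ B ^ n = β • 1 := by
  obtain ⟨A, B, h, hA, hB⟩ := exists_qCommute_end_adjoinRoot hζ a β
  let basis : Module.Basis (Fin n) K (AdjoinRoot (X ^ n - C β)) :=
    (AdjoinRoot.powerBasis' (monic_X_pow_sub_C β (NeZero.ne n))).basis.reindex
      (finCongr natDegree_X_pow_sub_C)
  let f := LinearMap.toMatrixAlgEquiv basis
  refine ⟨f A, f B, h.map f.toAlgHom, ?_, ?_⟩
  · rw [← map_pow, hA, map_smul, map_one]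
  · rw [← map_pow, hB, map_smul, map_one]

end Existence

theorem statement8_general (K : Type*) [Field K] (n : ℕ) (hn : 1 ≤ n)
    (ζ : K) (hζ : IsPrimitiveRoot ζ n) :
    (∀ A B : GL (Fin n) K,
        (↑(A * B * A⁻¹ * B⁻¹) : Matrix (Fin n) (Fin n) K)
          = ζ • (1 : Matrix (Fin n) (Fin n) K) →
        ∃! αβ : K × K, αβ.1 ≠ 0 ∧ αβ.2 ≠ 0 ∧
          (A : Matrix (Fin n) (Fin n) K) ^ n = αβ.1 • (1 : Matrix (Fin n) (Fin n) K) ∧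
          (B : Matrix (Fin n) (Fin n) K) ^ n = αβ.2 • (1 : Matrix (Fin n) (Fin n) K)) ∧
    (∀ A B A' B' : GL (Fin n) K,
        (↑(A * B * A⁻¹ * B⁻¹) : Matrix (Fin n) (Fin n) K)
          = ζ • (1 : Matrix (Fin n) (Fin n) K) →
        (↑(A' * B' * A'⁻¹ * B'⁻¹) : Matrix (Fin n) (Fin n) K)
          = ζ • (1 : Matrix (Fin n) (Fin n) K) →
        ((∃ g : GL (Fin n) K, A' = g * A * g⁻¹ ∧ B' = g * B * g⁻¹) ↔
          ((A : Matrix (Fin n) (Fin n) K) ^ n = (A' : Matrix (Fin n) (Fin n) K) ^ n ∧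
           (B : Matrix (Fin n) (Fin n) K) ^ n = (B' : Matrix (Fin n) (Fin n) K) ^ n))) ∧
    (∀ α β : K, α ≠ 0 → β ≠ 0 → (∃ a, a ^ n = α) →
        ∃ A B : GL (Fin n) K,
          (↑(A * B * A⁻¹ * B⁻¹) : Matrix (Fin n) (Fin n) K)
            = ζ • (1 : Matrix (Fin n) (Fin n) K) ∧
          (A : Matrix (Fin n) (Fin n) K) ^ n = α • (1 : Matrix (Fin n) (Fin n) K) ∧
          (B : Matrix (Fin n) (Fin n) K) ^ n = β • (1 : Matrix (Fin n) (Fin n) K)) := by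
  have : NeZero n := ⟨by lia⟩
  simp only [QCommute.coe_commutator_eq_smul_one_iff]
  refine ⟨fun A B h ↦ h.existsUnique_pow_eq_smul_one hζ,
    fun A B A' B' h h' ↦ h.exists_conj_eq_iff h' hζ, ?_⟩
  rintro _ β hα hβ ⟨a, rfl⟩
  obtain ⟨A, B, h, hA, hB⟩ := exists_qCommute_matrix hζ.pow_eq_one a β
  lift A to GL (Fin n) K using isUnit_of_pow_eq_smul_one (NeZero.ne n) hα hA
  lift B to GL (Fin n) K using isUnit_of_pow_eq_smul_one (NeZero.ne n) hβ hB
  exact ⟨A, B, h, hA, hB⟩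

/-- Let `K` be an algebraically closed field, `n ≥ 1` and `ζ ∈ K` a
primitive `n`-th root of unity.  For pairs `(A,B) ∈ GL(n,K)²` with `A B A⁻¹ B⁻¹ = ζ·Iₙ`:
(i) each such pair satisfies `Aⁿ = α·Iₙ`, `Bⁿ = β·Iₙ` for unique `α, β ∈ K^×`;
(ii) two such pairs are simultaneously conjugate iff `Aⁿ = A'ⁿ` and `Bⁿ = B'ⁿ`;
(iii) every `(α,β) ∈ K^× × K^×` arises this way.  Hence `(A,B) ↦ (α,β)` induces a
bijection between conjugation orbits of solutions and `K^× × K^×`. -/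
theorem statement8 (K : Type*) [Field K] [IsAlgClosed K] (n : ℕ) (hn : 1 ≤ n)
    (ζ : K) (hζ : IsPrimitiveRoot ζ n) :
    (∀ A B : GL (Fin n) K,
        (↑(A * B * A⁻¹ * B⁻¹) : Matrix (Fin n) (Fin n) K)
          = ζ • (1 : Matrix (Fin n) (Fin n) K) →
        ∃! αβ : K × K, αβ.1 ≠ 0 ∧ αβ.2 ≠ 0 ∧
          (A : Matrix (Fin n) (Fin n) K) ^ n = αβ.1 • (1 : Matrix (Fin n) (Fin n) K) ∧
          (B : Matrix (Fin n) (Fin n) K) ^ n = αβ.2 • (1 : Matrix (Fin n) (Fin n) K)) ∧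
    (∀ A B A' B' : GL (Fin n) K,
        (↑(A * B * A⁻¹ * B⁻¹) : Matrix (Fin n) (Fin n) K)
          = ζ • (1 : Matrix (Fin n) (Fin n) K) →
        (↑(A' * B' * A'⁻¹ * B'⁻¹) : Matrix (Fin n) (Fin n) K)
          = ζ • (1 : Matrix (Fin n) (Fin n) K) →
        ((∃ g : GL (Fin n) K, A' = g * A * g⁻¹ ∧ B' = g * B * g⁻¹) ↔
          ((A : Matrix (Fin n) (Fin n) K) ^ n = (A' : Matrix (Fin n) (Fin n) K) ^ n ∧
           (B : Matrix (Fin n) (Fin n) K) ^ n = (B' : Matrix (Fin n) (Fin n) K) ^ n))) ∧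
    (∀ α β : K, α ≠ 0 → β ≠ 0 →
        ∃ A B : GL (Fin n) K,
          (↑(A * B * A⁻¹ * B⁻¹) : Matrix (Fin n) (Fin n) K)
            = ζ • (1 : Matrix (Fin n) (Fin n) K) ∧
          (A : Matrix (Fin n) (Fin n) K) ^ n = α • (1 : Matrix (Fin n) (Fin n) K) ∧
          (B : Matrix (Fin n) (Fin n) K) ^ n = β • (1 : Matrix (Fin n) (Fin n) K)) := by
  obtain ⟨powers, conj, existence⟩ := statement8_general K n hn ζ hζ
  exact ⟨powers, conj, fun α β hα hβ ↦ existence α β hα hβ (IsAlgClosed.exists_pow_nat_eq α hn)⟩
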